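/- arXiv:1611.02292 — 3 statements merged into one kernel-verified Lean document; each statement's English description precedes it below -/
import Mathlib

section
/- Let L ⊆ V ⊕ ∧^k V* be a non-standard weakly lagrangian subspace, i.e., L is weakly lagrangian and Ann(pr₁(L))° ≠ pr₁(L). Then there exists B ∈ ∧^{k+1} V* such that e^B(L) is not weakly lagrangian. -/
/-!
Put `k = m + 1` and `E = pr₁(L)`; by isotropy, `L ∩ ∧^k V^* ⊆ Ann(E)`.

If `Ann(E)` contained a nonzero form, then contracting it and wedging with covectors that vanish
on `E` would produce, for every `X ∉ E`, a form in `Ann(E)` not killed by `i_X`; so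
`Ann(E)° = E`, against the hypothesis (`polarS_AnnE_of_ne_bot`). Hence `Ann(E) = 0`, and `L` is
the graph of a map `ε : E → ∧^k V^*` with `i_X ε(Y) = -i_Y ε(X)`. Such a map is the contraction
with a single `(k+1)`-form: `ε(X) = i_X B` for some `B`, found by enlarging the subspace on which
the equality holds one vector at a time (`exists_form_of_isotropic`).

Then `e^{-B}(L) = E ⊕ 0`. Its second projection is `0`, whose polar is `V`, while its intersection
with `V` is `E`; and `E ≠ V`, since `Ann(V)° = V`. So `e^{-B}(L)` is not weakly lagrangian.
-/


open Module Submodule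

noncomputable section

/-- `∧^m V^*`, modeled as alternating `m`-linear forms on `V`. -/
abbrev Alt (V : Type*) [AddCommGroup V] [Module ℝ V] (m : ℕ) :=
  V [⋀^Fin m]→ₗ[ℝ] ℝ

/-- The interior product `i_X : ∧^{m+1} V^* → ∧^m V^*`, as a linear map in the form. -/
def iprod (V : Type*) [AddCommGroup V] [Module ℝ V] (m : ℕ) (X : V) :
    Alt V (m + 1) →ₗ[ℝ] Alt V m :=
  AlternatingMap.curryLeftLinearMap.flip X

lemma iprod_add_left {V : Type*} [AddCommGroup V] [Module ℝ V] (m : ℕ) (X Y : V)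
    (α : Alt V (m + 1)) : iprod V m (X + Y) α = iprod V m X α + iprod V m Y α := by
  simp [iprod]

lemma iprod_smul_left {V : Type*} [AddCommGroup V] [Module ℝ V] (m : ℕ) (c : ℝ) (X : V)
    (α : Alt V (m + 1)) : iprod V m (c • X) α = c • iprod V m X α := by
  simp [iprod]

/-- The `∧^m V^*`-valued pairing on `W = V ⊕ ∧^{m+1} V^*`:
`⟨(X,α),(Y,β)⟩ = i_X β + i_Y α`. -/
def pairW (V : Type*) [AddCommGroup V] [Module ℝ V] (m : ℕ)
    (u v : V × Alt V (m + 1)) : Alt V m :=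
  iprod V m u.1 v.2 + iprod V m v.1 u.2

lemma pairW_add_left {V : Type*} [AddCommGroup V] [Module ℝ V] (m : ℕ)
    (u u' v : V × Alt V (m + 1)) :
    pairW V m (u + u') v = pairW V m u v + pairW V m u' v := by
  simp only [pairW, Prod.fst_add, Prod.snd_add, iprod_add_left, map_add]
  abel

lemma pairW_smul_left {V : Type*} [AddCommGroup V] [Module ℝ V] (m : ℕ) (c : ℝ)
    (u v : V × Alt V (m + 1)) :
    pairW V m (c • u) v = c • pairW V m u v := by
  simp only [pairW, Prod.smul_fst, Prod.smul_snd, iprod_smul_left, map_smul, smul_add]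

/-- A subspace of `W = V ⊕ ∧^{m+1}V^*` is isotropic if the pairing vanishes on it. -/
def IsIsotropic (V : Type*) [AddCommGroup V] [Module ℝ V] (m : ℕ)
    (L : Submodule ℝ (V × Alt V (m + 1))) : Prop :=
  ∀ u ∈ L, ∀ v ∈ L, pairW V m u v = 0

/-- The orthogonal `L^⊥` of a subspace `L ⊆ V ⊕ ∧^{m+1}V^*` w.r.t. the pairing. -/
def perpW (V : Type*) [AddCommGroup V] [Module ℝ V] (m : ℕ)
    (L : Submodule ℝ (V × Alt V (m + 1))) : Submodule ℝ (V × Alt V (m + 1)) where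
  carrier := {w | ∀ l ∈ L, pairW V m w l = 0}
  add_mem' := by
    intro a b ha hb l hl
    rw [pairW_add_left, ha l hl, hb l hl, add_zero]
  zero_mem' := by
    intro l hl
    simp [pairW, iprod]
  smul_mem' := by
    intro c a ha l hl
    rw [pairW_smul_left, ha l hl, smul_zero]

/-- The annihilator `Ann(E) ⊆ ∧^{m+1} V^*` of a subspace `E ⊆ V`. -/
def AnnE (V : Type*) [AddCommGroup V] [Module ℝ V] (m : ℕ) (E : Submodule ℝ V) :
    Submodule ℝ (Alt V (m + 1)) where
  carrier := {α | ∀ X ∈ E, iprod V m X α = 0}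
  add_mem' := by
    intro a b ha hb X hX
    rw [map_add, ha X hX, hb X hX, add_zero]
  zero_mem' := by intro X hX; simp
  smul_mem' := by
    intro c a ha X hX
    rw [map_smul, ha X hX, smul_zero]

/-- The annihilator `S° ⊆ V` of a subspace `S ⊆ ∧^{m+1} V^*`. -/
def polarS (V : Type*) [AddCommGroup V] [Module ℝ V] (m : ℕ)
    (S : Submodule ℝ (Alt V (m + 1))) : Submodule ℝ V where
  carrier := {X | ∀ α ∈ S, iprod V m X α = 0}
  add_mem' := by
    intro a b ha hb α hα
    show iprod V m (a + b) α = 0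
    rw [iprod_add_left, ha α hα, hb α hα, add_zero]
  zero_mem' := by
    intro α hα
    show iprod V m 0 α = 0
    simp [iprod]
  smul_mem' := by
    intro c a ha α hα
    show iprod V m (c • a) α = 0
    rw [iprod_smul_left, ha α hα, smul_zero]

/-- The `B`-field transform `e^B (X, α) = (X, α + i_X B)`. -/
def eB (V : Type*) [AddCommGroup V] [Module ℝ V] (m : ℕ) (B : Alt V (m + 2)) :
    (V × Alt V (m + 1)) →ₗ[ℝ] (V × Alt V (m + 1)) :=
  LinearMap.prod (LinearMap.fst ℝ V (Alt V (m + 1)))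
    (LinearMap.snd ℝ V (Alt V (m + 1)) + B.curryLeft.comp (LinearMap.fst ℝ V (Alt V (m + 1))))

/-- The projection `pr₁(L) ⊆ V` of a subspace `L ⊆ V ⊕ ∧^{m+1}V^*`. -/
def pr1 (V : Type*) [AddCommGroup V] [Module ℝ V] (m : ℕ)
    (L : Submodule ℝ (V × Alt V (m + 1))) : Submodule ℝ V :=
  Submodule.map (LinearMap.fst ℝ V (Alt V (m + 1))) L

/-- The projection `pr₂(L) ⊆ ∧^{m+1}V^*` of a subspace `L ⊆ V ⊕ ∧^{m+1}V^*`. -/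
def pr2S (V : Type*) [AddCommGroup V] [Module ℝ V] (m : ℕ)
    (L : Submodule ℝ (V × Alt V (m + 1))) : Submodule ℝ (Alt V (m + 1)) :=
  Submodule.map (LinearMap.snd ℝ V (Alt V (m + 1))) L

/-- `L ∩ V`, viewed as a subspace of `V` (identifying `V` with `V ⊕ 0`). -/
def capV (V : Type*) [AddCommGroup V] [Module ℝ V] (m : ℕ)
    (L : Submodule ℝ (V × Alt V (m + 1))) : Submodule ℝ V :=
  Submodule.comap (LinearMap.inl ℝ V (Alt V (m + 1))) L

/-- `L ∩ ∧^{m+1}V^*`, viewed as a subspace of `∧^{m+1}V^*`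
(identifying `∧^{m+1}V^*` with `0 ⊕ ∧^{m+1}V^*`). -/
def capF (V : Type*) [AddCommGroup V] [Module ℝ V] (m : ℕ)
    (L : Submodule ℝ (V × Alt V (m + 1))) : Submodule ℝ (Alt V (m + 1)) :=
  Submodule.comap (LinearMap.inr ℝ V (Alt V (m + 1))) L

/-- The graph `gr(ω) = {(X, i_X ω) : X ∈ V}` of `ω ∈ ∧^{m+2}V^*`. -/
def grOmega (V : Type*) [AddCommGroup V] [Module ℝ V] (m : ℕ) (ω : Alt V (m + 2)) :
    Submodule ℝ (V × Alt V (m + 1)) :=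
  LinearMap.range (LinearMap.prod LinearMap.id ω.curryLeft)

/-- `L` is weakly lagrangian if it is isotropic and `L ∩ V = pr₂(L)°`. -/
def IsWeaklyLagrangian (V : Type*) [AddCommGroup V] [Module ℝ V] (m : ℕ)
    (L : Submodule ℝ (V × Alt V (m + 1))) : Prop :=
  IsIsotropic V m L ∧ capV V m L = polarS V m (pr2S V m L)


lemma iprod_eq_zero_apply {V : Type*} [AddCommGroup V] [Module ℝ V] {n : ℕ} {X : V}
    {α : Alt V (n + 1)} (h : iprod V n X α = 0) (u : Fin (n + 1) → V) (j : Fin (n + 1))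
    (hu : u j = X) : α u = 0 := by
  have h0 : α (Matrix.vecCons X (j.removeNth u)) = 0 := DFunLike.congr_fun h (j.removeNth u)
  rw [← Fin.insertNth_self_removeNth j u, AlternatingMap.map_insertNth, hu, h0, smul_zero]

lemma iprod_iprod_self {V : Type*} [AddCommGroup V] [Module ℝ V] (n : ℕ) (X : V)
    (B : Alt V (n + 2)) : iprod V n X (iprod V (n + 1) X B) = 0 :=
  AlternatingMap.curryLeft_same B X

lemma iprod_iprod_swap {V : Type*} [AddCommGroup V] [Module ℝ V] (n : ℕ) (X Y : V)
    (B : Alt V (n + 2)) :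
    iprod V n X (iprod V (n + 1) Y B) = - iprod V n Y (iprod V (n + 1) X B) := by
  have h := iprod_iprod_self n (X + Y) B
  simp only [iprod_add_left, map_add, iprod_iprod_self, zero_add, add_zero] at h
  exact eq_neg_of_add_eq_zero_right h

/-- The wedge product `φ ∧ β` of a covector with an `n`-form, normalized so that
`(φ ∧ β)(v₀, …, vₙ) = ∑ᵢ (-1)ⁱ φ(vᵢ) β(v₀, …, v̂ᵢ, …, vₙ)`. -/
def covectorWedge {V : Type*} [AddCommGroup V] [Module ℝ V] {n : ℕ} (φ : V →ₗ[ℝ] ℝ)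
    (β : Alt V n) : Alt V (n + 1) :=
  AlternatingMap.alternatizeUncurryFin (φ.smulRight β)

/-- `i_X (φ ∧ β) = φ(X) β` whenever `i_X β = 0`. The hypothesis is phrased through the values of
`β` so that it also makes sense for `0`-forms, for which it is vacuous. -/
lemma iprod_covectorWedge {V : Type*} [AddCommGroup V] [Module ℝ V] {n : ℕ} (φ : V →ₗ[ℝ] ℝ)
    (β : Alt V n) (X : V) (h : ∀ (u : Fin n → V) (i : Fin n), u i = X → β u = 0) :
    iprod V n X (covectorWedge φ β) = φ X • β := by
  ext v
  change AlternatingMap.alternatizeUncurryFin (φ.smulRight β) (Matrix.vecCons X v) = φ X • β v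
  rw [AlternatingMap.alternatizeUncurryFin_apply, Fin.sum_univ_succ, Finset.sum_eq_zero]
  · simp [Fin.removeNth_zero, Matrix.vecCons]
  · intro i _
    -- The `(i+1)`-st term still has `X` in slot `0`.
    obtain ⟨n', rfl⟩ : ∃ n', n = n' + 1 := ⟨n - 1, by have := i.2; omega⟩
    have h0 : β (i.succ.removeNth (Matrix.vecCons X v)) = 0 :=
      h _ 0 (by simp [Fin.removeNth, Matrix.vecCons])
    simp [h0]

/-- A subspace `E` with `Ann(E) ≠ 0` is recovered as `Ann(E)°`. -/
lemma polarS_AnnE_of_ne_bot {V : Type*} [AddCommGroup V] [Module ℝ V] (m : ℕ)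
    (E : Submodule ℝ V) (h : AnnE V m E ≠ ⊥) : polarS V m (AnnE V m E) = E := by
  refine le_antisymm (fun X hX => ?_) (fun X hX α hα => hα X hX)
  by_contra hXE
  obtain ⟨α, hα, hα0⟩ := Submodule.exists_mem_ne_zero_of_ne_bot h
  obtain ⟨φ, hφX, hφE⟩ := Submodule.exists_le_ker_of_notMem hXE
  -- `i_X α = 0` as `X ∈ Ann(E)°`, so `φ ∧ i_v α` is in `Ann(E)` and `i_X` sends it to `φ(X) i_v α`.
  have key : ∀ v, iprod V m v α = 0 := by
    intro v
    have hvan : ∀ Y, iprod V m Y α = 0 →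
        iprod V m Y (covectorWedge φ (iprod V m v α)) = φ Y • iprod V m v α := by
      intro Y hY
      refine iprod_covectorWedge _ _ _ fun u i hu => ?_
      exact iprod_eq_zero_apply hY (Matrix.vecCons v u) i.succ (by simpa using hu)
    have hmem : covectorWedge φ (iprod V m v α) ∈ AnnE V m E := by
      intro Y hY
      rw [hvan Y (hα Y hY), LinearMap.mem_ker.1 (hφE hY), zero_smul]
    have h0 := hX _ hmem
    rw [hvan X (hX α hα)] at h0
    exact (smul_eq_zero.1 h0).resolve_left hφX
  exact hα0 (AlternatingMap.ext fun u => iprod_eq_zero_apply (key (u 0)) u 0 rfl)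

/-- An isotropic subspace meeting `∧^{m+1} V^*` trivially lies in the graph of contraction with a
single form `B`. -/
lemma exists_form_of_isotropic {V : Type*} [AddCommGroup V] [Module ℝ V] [FiniteDimensional ℝ V]
    (m : ℕ) (L : Submodule ℝ (V × Alt V (m + 1))) (hiso : IsIsotropic V m L)
    (hcap : capF V m L = ⊥) :
    ∃ B : Alt V (m + 2), ∀ l ∈ L, l.2 = iprod V (m + 1) l.1 B := by
  classical
  have key : ∀ s : Finset V, (s : Set V) ⊆ pr1 V m L →
      ∃ B : Alt V (m + 2), ∀ l ∈ L, l.1 ∈ span ℝ (s : Set V) →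
        l.2 = iprod V (m + 1) l.1 B := by
    intro s
    induction s using Finset.induction_on with
    | empty =>
      rintro -
      refine ⟨0, fun l hl hl1 => ?_⟩
      obtain ⟨X, α⟩ := l
      have hX : X = 0 := by simpa using hl1
      subst hX
      have : α ∈ capF V m L := hl
      rw [hcap] at this
      simpa using this
    | insert w s _ ih =>
      intro hs
      rw [Finset.coe_insert, Set.insert_subset_iff] at hs
      obtain ⟨B, hB⟩ := ih hs.2
      obtain ⟨⟨w', β₀⟩, hwL, hw'⟩ := hs.1
      have hw'' : w' = w := hw'
      subst hw''
      set F := span ℝ (s : Set V) with hF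
      by_cases hwF : w' ∈ F
      · refine ⟨B, fun l hl hl1 => hB l hl ?_⟩
        rwa [Finset.coe_insert, Submodule.span_insert_eq_span hwF] at hl1
      obtain ⟨φ, hφw, hφF⟩ := Submodule.exists_le_ker_of_notMem hwF
      -- The defect of `B` at `w'`; the correction to `B` is `φ ∧ β / φ(w')`.
      set β : Alt V (m + 1) := β₀ - iprod V (m + 1) w' B with hβ
      have hβw : iprod V m w' β = 0 := by
        have h2 : iprod V m w' β₀ + iprod V m w' β₀ = 0 := hiso _ hwL _ hwL
        rw [hβ, map_sub, iprod_iprod_self, sub_zero]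
        rw [← two_smul ℝ] at h2
        exact (smul_eq_zero.1 h2).resolve_left two_ne_zero
      have hβF : ∀ l ∈ L, l.1 ∈ F → iprod V m l.1 β = 0 := by
        intro l hl hlF
        have h2 : iprod V m l.1 β₀ + iprod V m w' l.2 = 0 := hiso _ hl _ hwL
        rw [hB l hl hlF] at h2
        rw [hβ, map_sub, iprod_iprod_swap, sub_neg_eq_add, h2]
      refine ⟨B + (φ w')⁻¹ • covectorWedge φ β, fun l hl hl1 => ?_⟩
      rw [Finset.coe_insert, Submodule.mem_span_insert] at hl1
      obtain ⟨c, Y, hY, hl1⟩ := hl1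
      have hl' : l - c • (w', β₀) ∈ L := L.sub_mem hl (L.smul_mem c hwL)
      have hfst : (l - c • (w', β₀)).1 = Y := by simp [hl1]
      have hsnd := hB _ hl' (by rw [hfst]; exact hY)
      have hYβ := hβF _ hl' (by rw [hfst]; exact hY)
      rw [hfst] at hsnd hYβ
      have hwC : iprod V (m + 1) w' (covectorWedge φ β) = φ w' • β :=
        iprod_covectorWedge _ _ _ fun u i hu => iprod_eq_zero_apply hβw u i hu
      have hYC : iprod V (m + 1) Y (covectorWedge φ β) = 0 := by
        rw [iprod_covectorWedge _ _ _ fun u i hu => iprod_eq_zero_apply hYβ u i hu,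
          LinearMap.mem_ker.1 (hφF hY), zero_smul]
      have hl2 : l.2 = iprod V (m + 1) Y B + c • β₀ := by
        rw [← hsnd]; simp
      rw [hl2, hl1, iprod_add_left, iprod_smul_left, map_add, map_add, map_smul, map_smul, hwC,
        hYC, smul_smul, inv_mul_cancel₀ hφw, hβ]
      simp only [one_smul, smul_zero, add_zero, smul_sub, smul_add]
      abel
  obtain ⟨s, hs⟩ := IsNoetherian.noetherian (pr1 V m L)
  obtain ⟨B, hB⟩ := key s (hs ▸ Submodule.subset_span)
  exact ⟨B, fun l hl => hB l hl (hs ▸ ⟨l, hl, rfl⟩)⟩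

/-- For a non-standard weakly lagrangian `L`, there is a
`B ∈ ∧^{k+1} V^*` such that `e^B(L)` is not weakly lagrangian.
(Here the `k` of the statement is `m + 1`.) -/
theorem stmt_17 {V : Type*} [AddCommGroup V] [Module ℝ V] [FiniteDimensional ℝ V]
    (m : ℕ) (hmn : m + 1 ≤ finrank ℝ V - 1)
    (L : Submodule ℝ (V × Alt V (m + 1)))
    (hwl : IsWeaklyLagrangian V m L)
    (hnstd : polarS V m (AnnE V m (pr1 V m L)) ≠ pr1 V m L) :
    ∃ B : Alt V (m + 2),
      ¬ IsWeaklyLagrangian V m (Submodule.map (eB V m B) L) := by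
  obtain ⟨hiso, -⟩ := hwl
  have hAnn : AnnE V m (pr1 V m L) = ⊥ := by
    by_contra h
    exact hnstd (polarS_AnnE_of_ne_bot m _ h)
  have hcap : capF V m L = ⊥ := by
    rw [eq_bot_iff, ← hAnn]
    rintro β hβ X ⟨⟨X', α⟩, hl, hX'⟩
    have hX'' : X' = X := hX'
    subst hX''
    have h : iprod V m X' β + iprod V m 0 α = 0 := hiso _ hl (0, β) hβ
    simpa [iprod] using h
  obtain ⟨B, hB⟩ := exists_form_of_isotropic m L hiso hcap
  refine ⟨-B, fun hw => hnstd ?_⟩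
  have hsnd : ∀ l ∈ L, (eB V m (-B) l).2 = 0 := by
    intro l hl
    have h : (eB V m (-B) l).2 = l.2 + iprod V (m + 1) l.1 (-B) := rfl
    rw [h, map_neg, ← hB l hl, add_neg_cancel]
  have htop : pr1 V m L = ⊤ := by
    rw [eq_top_iff]
    intro X _
    have hX : X ∈ polarS V m (pr2S V m (Submodule.map (eB V m (-B)) L)) := by
      rintro _ ⟨_, ⟨l, hl, rfl⟩, rfl⟩
      rw [LinearMap.snd_apply, hsnd l hl, map_zero]
    rw [← hw.2] at hX
    obtain ⟨l, hl, hlX⟩ := hX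
    exact ⟨l, hl, congrArg Prod.fst hlX⟩
  rw [htop, eq_top_iff]
  exact fun X hX α hα => hα X hX


end
end

section
/- Let k ≥ 2 and let L ⊆ V ⊕ ∧^k V* be a standard isotropic subspace (isotropic with Ann(pr₁(L))° = pr₁(L)) satisfying condition (C2s): Ann(L ∩ V) = pr₂(L), where Ann(L ∩ V) := {α ∈ ∧^k V* : i_X α = 0 for all X ∈ L ∩ V}. Then L is lagrangian (L = L⊥); in particular, L ∩ V = pr₂(L)°. -/
/-!
Write `D = L ∩ V`, so that `pr₂(L) = Ann(D)`. If `w = (X, α) ∈ L^⊥`, pairing `w` with `D` gives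
`α ∈ Ann(D) = pr₂(L)`; subtracting an element of `L` with the same form, one is left with
`(X', 0) ∈ L^⊥`, that is, `X' ∈ pr₂(L)°`. Everything therefore reduces to
`pr₂(L)° = Ann(D)° ⊆ D`.

If `Ann(D) ≠ 0`, then `Ann(D)° = D` holds for every subspace `D` (`polarS_AnnE_le`). If
`Ann(D) = 0`, then `pr₂(L) = 0`, hence `pr₁(L) = D`, and the equality `Ann(D)° = D` is the
standardness of `L`.
-/

open Module Submodule

noncomputable section

/-- A subspace annihilated by some nonzero form is recovered from its annihilator: given `X ∉ D`
and `0 ≠ α ∈ Ann(D)`, either `i_X α ≠ 0`, or pulling `α` back along a transvection that fixes `D`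
and sends `X` to a vector `Y` with `i_Y α ≠ 0` gives a form in `Ann(D)` not killed by `X`. -/
lemma polarS_AnnE_le {V : Type*} [AddCommGroup V] [Module ℝ V] (m : ℕ) (D : Submodule ℝ V)
    (h : AnnE V m D ≠ ⊥) : polarS V m (AnnE V m D) ≤ D := by
  intro X hX
  by_contra hXD
  obtain ⟨α, hα, hα0⟩ := Submodule.exists_mem_ne_zero_of_ne_bot h
  have hXα : iprod V m X α = 0 := hX α hα
  obtain ⟨g, hgX, hgD⟩ := Submodule.exists_le_ker_of_notMem hXD
  obtain ⟨f, hfX, hfD⟩ : ∃ f : V →ₗ[ℝ] ℝ, f X = 1 ∧ ∀ d ∈ D, f d = 0 :=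
    ⟨(g X)⁻¹ • g, by simp [hgX], fun d hd => by simp [LinearMap.mem_ker.1 (hgD hd)]⟩
  obtain ⟨u, hu⟩ : ∃ u, α u ≠ 0 := by
    by_contra! hc
    exact hα0 (AlternatingMap.ext hc)
  -- Since `i_X α = 0`, adding a multiple of `X` to `u 0` normalizes `f Y` without changing `i_Y α`.
  obtain ⟨Y, hfY, v, hYv⟩ : ∃ Y, f Y = 1 ∧ ∃ v, iprod V m Y α v ≠ 0 := by
    refine ⟨u 0 + (1 - f (u 0)) • X, by simp [hfX], Fin.tail u, ?_⟩
    rw [iprod_add_left, iprod_smul_left, hXα, smul_zero, add_zero]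
    change α (Matrix.vecCons (u 0) (Fin.tail u)) ≠ 0
    rwa [show Matrix.vecCons (u 0) (Fin.tail u) = u from Fin.cons_self_tail u]
  let T : V →ₗ[ℝ] V := LinearMap.id + f.smulRight (Y - X)
  have hT : ∀ w, T w = w + f w • (Y - X) := fun w => rfl
  have key : ∀ Z w, iprod V m Z (α.compLinearMap T) w = iprod V m (T Z) α (fun i => T (w i)) := by
    intro Z w
    change α (fun i => T (Matrix.vecCons Z w i)) = α (Matrix.vecCons (T Z) fun i => T (w i))
    congr 1
    funext i
    refine Fin.cases ?_ (fun j => ?_) i <;> simp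
  have hmem : α.compLinearMap T ∈ AnnE V m D := by
    intro d hd
    ext w
    rw [key, hT d, hfD d hd, zero_smul, add_zero, hα d hd]
    rfl
  have h0 : iprod V m X (α.compLinearMap T) = 0 := hX _ hmem
  apply hYv
  -- As `f (Y - X) = 0`, the inverse of `T` is `w ↦ w - f w • (Y - X)`.
  have h1 := key X (fun i => v i - f (v i) • (Y - X))
  rw [h0] at h1
  have h2 : ∀ i, T (v i - f (v i) • (Y - X)) = v i := by
    intro i
    simp [hT, hfX, hfY]
  have h3 : T X = Y := by simp [hT, hfX]
  simp only [h2, h3] at h1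
  exact h1.symm

/-- For `k ≥ 2`, a standard isotropic `L` satisfying (C2s)
`Ann(L ∩ V) = pr₂(L)` is lagrangian, and in particular `L ∩ V = pr₂(L)°`.
(Here the `k` of the statement is `m + 2`, so that `k ≥ 2`.) -/
theorem stmt_18 {V : Type*} [AddCommGroup V] [Module ℝ V] [FiniteDimensional ℝ V]
    (m : ℕ) (hmn : m + 2 ≤ finrank ℝ V - 1)
    (L : Submodule ℝ (V × Alt V (m + 2)))
    (hiso : IsIsotropic V (m + 1) L)
    (hstd : polarS V (m + 1) (AnnE V (m + 1) (pr1 V (m + 1) L)) = pr1 V (m + 1) L)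
    (hC2s : AnnE V (m + 1) (capV V (m + 1) L) = pr2S V (m + 1) L) :
    L = perpW V (m + 1) L ∧
      capV V (m + 1) L = polarS V (m + 1) (pr2S V (m + 1) L) := by
  have hD : polarS V (m + 1) (AnnE V (m + 1) (capV V (m + 1) L)) ≤ capV V (m + 1) L := by
    by_cases h : AnnE V (m + 1) (capV V (m + 1) L) = ⊥
    · have hE : pr1 V (m + 1) L = capV V (m + 1) L := by
        ext X
        constructor
        · rintro ⟨⟨X', β⟩, hl, rfl⟩
          have hβ : β ∈ pr2S V (m + 1) L := ⟨(X', β), hl, rfl⟩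
          rw [← hC2s, h, Submodule.mem_bot] at hβ
          subst hβ
          exact hl
        · intro hX
          exact ⟨(X, 0), hX, rfl⟩
      rw [hE] at hstd
      exact hstd.le
    · exact polarS_AnnE_le _ _ h
  refine ⟨le_antisymm (fun w hw l hl => hiso w hw l hl) ?_, le_antisymm ?_ ?_⟩
  · rintro ⟨X, α⟩ hw
    have hα : α ∈ AnnE V (m + 1) (capV V (m + 1) L) := by
      intro Y hY
      have := hw (Y, 0) hY
      simpa [pairW] using this
    rw [hC2s] at hα
    obtain ⟨⟨X', α'⟩, hl, rfl⟩ := hα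
    have hsub : (X - X', (0 : Alt V (m + 2))) ∈ perpW V (m + 1) L := by
      have := (perpW V (m + 1) L).sub_mem hw (fun l hl' => hiso _ hl l hl')
      simpa using this
    have hX : X - X' ∈ capV V (m + 1) L := by
      apply hD
      rw [hC2s]
      rintro _ ⟨l, hl', rfl⟩
      have := hsub l hl'
      simpa [pairW] using this
    have hX' : (X - X', (0 : Alt V (m + 2))) ∈ L := hX
    have := L.add_mem hX' hl
    simpa using this
  · rintro X hX _ ⟨l, hl, rfl⟩
    have := hiso (X, 0) hX l hl
    simpa [pairW] using this
  · rw [← hC2s]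
    exact hD

end
end

section
/- Let L ⊆ V ⊕ ∧^k V* be an isotropic subspace that is non-standard in the sense that n − k < dim pr₁(L) < n. Then: (i) L ∩ ∧^k V* = {0}, so Ann(pr₁(L)) = L ∩ ∧^k V* (both are zero); (ii) (L ∩ ∧^k V*)° = V ≠ pr₁(L); and (iii) L is not lagrangian. -/
/-!
Isotropy gives `L ∩ ∧^k V^* ⊆ Ann(pr₁ L)`, and `Ann(pr₁ L) = 0` because a `k`-form killed by
`E = pr₁ L` descends to `V / E`, whose dimension is less than `k` (`AnnE_eq_bot`). Parts (i) and
(ii) follow, and `L` is the graph of a linear map `φ : E → ∧^k V^*` with `i_X φ(X) = 0`.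

For (iii), pick `Y ∉ E` and set `ψ(X) = -i_Y φ(X)`. This map again satisfies `i_X ψ(X) = 0`, so there
is a `k`-form `β` with `i_X β = ψ(X)` for all `X ∈ E` (`exists_iprod_eq`). Then `(Y, β)` lies in
`L^⊥`, but not in `L` since `Y ∉ E`.

The form `β` is built by adding one generator of `E` at a time. If `ψ` vanishes on `E'`,
`e ∉ E'`, and `ε` is a linear functional with `ε(e) = 1` and `ε|_{E'} = 0`, then `β = ε ∧ ψ(e)` has
the required contractions with `E' ⊕ ⟨e⟩`.
-/

open Module Submodule

noncomputable section

/-- If `i_X α = 0`, then `α` vanishes as soon as one of its arguments, in any slot, is `X`. -/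
lemma apply_eq_zero_of_iprod {V : Type*} [AddCommGroup V] [Module ℝ V] {m : ℕ} {X : V}
    {α : Alt V (m + 1)} (h : iprod V m X α = 0) (v : Fin (m + 1) → V) (j : Fin (m + 1))
    (hj : v j = X) : α v = 0 := by
  have h0 : ∀ w, α (Matrix.vecCons X w) = 0 := fun w => DFunLike.congr_fun h w
  rw [← Fin.insertNth_self_removeNth j v, AlternatingMap.map_insertNth, hj, h0, smul_zero]

/-- A `k`-form whose contractions with `E` vanish is zero when `dim V - k < dim E`. -/
lemma AnnE_eq_bot {V : Type*} [AddCommGroup V] [Module ℝ V] [FiniteDimensional ℝ V]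
    {m : ℕ} {E : Submodule ℝ V} (h : finrank ℝ V - (m + 1) < finrank ℝ E) :
    AnnE V m E = ⊥ := by
  rw [eq_bot_iff]
  intro α hα
  rw [Submodule.mem_bot]
  ext v
  have hq := E.finrank_quotient_add_finrank
  -- The classes of the `k` arguments in `V / E` are linearly dependent.
  have hdep : ¬ LinearIndependent ℝ (fun i => E.mkQ (v i)) := by
    intro hli
    have := hli.fintype_card_le_finrank
    rw [Fintype.card_fin] at this
    omega
  rw [Fintype.not_linearIndependent_iff] at hdep
  obtain ⟨c, hc, i, hi⟩ := hdep
  have hmem : ∑ j, c j • v j ∈ E := by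
    rw [← Submodule.ker_mkQ E, LinearMap.mem_ker, map_sum]
    simpa using hc
  have hz : α (Function.update v i (∑ j, c j • v j)) = 0 :=
    apply_eq_zero_of_iprod (hα _ hmem) _ i (Function.update_self ..)
  rw [AlternatingMap.map_update_sum, Finset.sum_eq_single i] at hz
  · rw [AlternatingMap.map_update_smul, Function.update_eq_self, smul_eq_mul] at hz
    simpa [hi] using hz
  · intro j _ hj
    rw [AlternatingMap.map_update_smul, AlternatingMap.map_update_self _ _ hj.symm, smul_zero]
  · simp

/-- One step of the extension: `β = ε ∧ γ` satisfies `i_X β = ε(X) γ` for every `X` with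
`i_X γ = 0`. The latter condition is phrased through arguments so that it also covers `0`-forms,
where it is vacuous. -/
lemma exists_iprod_eq_smul {V : Type*} [AddCommGroup V] [Module ℝ V] {m : ℕ}
    (ε : V →ₗ[ℝ] ℝ) (γ : Alt V m) :
    ∃ β : Alt V (m + 1), ∀ X : V, (∀ (w : Fin m → V) (j : Fin m), w j = X → γ w = 0) →
      iprod V m X β = ε X • γ := by
  refine ⟨AlternatingMap.alternatizeUncurryFin (ε.smulRight γ), fun X hX => ?_⟩
  ext w
  change AlternatingMap.alternatizeUncurryFin (ε.smulRight γ) (Matrix.vecCons X w) = _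
  rw [AlternatingMap.alternatizeUncurryFin_apply, Fin.sum_univ_succ, Finset.sum_eq_zero]
  · have : Fin.removeNth 0 (Matrix.vecCons X w) = w := by
      ext j; simp [Fin.removeNth]
    simp [this]
  · intro i _
    -- The slot `i + 1` is removed, so `X` is still the first argument of `γ`.
    obtain ⟨p, rfl⟩ : ∃ p, m = p + 1 := ⟨m - 1, by have := i.2; omega⟩
    have : γ (i.succ.removeNth (Matrix.vecCons X w)) = 0 := by
      refine hX _ 0 ?_
      simp [Fin.removeNth]
    simp [this]

/-- A linear map `ψ` into `m`-forms with `i_X ψ(X) = 0` on `E` is, on `E`, contraction into an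
`(m+1)`-form. The hypothesis is phrased through arguments so that it also covers `m = 0`, where
it is vacuous. -/
lemma exists_iprod_eq {V : Type*} [AddCommGroup V] [Module ℝ V] [FiniteDimensional ℝ V] {m : ℕ}
    (ψ : V →ₗ[ℝ] Alt V m) (E : Submodule ℝ V)
    (h : ∀ X ∈ E, ∀ (w : Fin m → V) (j : Fin m), w j = X → ψ X w = 0) :
    ∃ β : Alt V (m + 1), ∀ X ∈ E, iprod V m X β = ψ X := by
  classical
  obtain ⟨s, rfl⟩ : ∃ s : Finset V, span ℝ (s : Set V) = E := IsNoetherian.noetherian E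
  induction s using Finset.induction_on with
  | empty =>
    refine ⟨0, fun X hX => ?_⟩
    have : X = 0 := by simpa using hX
    simp [this]
  | insert e s _ ih =>
    rw [Finset.coe_insert] at h ⊢
    have hle : span ℝ (s : Set V) ≤ span ℝ (insert e (s : Set V)) :=
      span_mono (Set.subset_insert _ _)
    have he : e ∈ span ℝ (insert e (s : Set V)) := subset_span (Set.mem_insert _ _)
    obtain ⟨β, hβ⟩ := ih fun X hX => h X (hle hX)
    by_cases hes : e ∈ span ℝ (s : Set V)
    · rw [span_insert_eq_span hes]
      exact ⟨β, hβ⟩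
    obtain ⟨ε, hε, hεe⟩ := LinearMap.exists_extend_of_notMem (0 : span ℝ (s : Set V) →ₗ[ℝ] ℝ) hes 1
    have hε0 : ∀ z ∈ span ℝ (s : Set V), ε z = 0 := fun z hz =>
      LinearMap.congr_fun hε ⟨z, hz⟩
    -- `χ` is the part of `ψ` that `β` does not account for; it vanishes on the span of `s`.
    let χ : V →ₗ[ℝ] Alt V m := ψ - β.curryLeft
    have hχ : ∀ X, χ X = ψ X - iprod V m X β := fun X => rfl
    have hχ0 : ∀ z ∈ span ℝ (s : Set V), χ z = 0 := fun z hz => by rw [hχ, hβ z hz, sub_self]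
    have hχX : ∀ X ∈ span ℝ (insert e (s : Set V)), ∀ (w : Fin m → V) (j : Fin m),
        w j = X → χ X w = 0 := by
      intro X hX w j hj
      have : iprod V m X β w = 0 :=
        β.map_eq_zero_of_eq (Matrix.vecCons X w) (i := 0) (j := j.succ) (by simp [hj])
          (Fin.succ_ne_zero j).symm
      rw [hχ, AlternatingMap.sub_apply, h X hX w j hj, this, sub_zero]
    -- Polarizing `i_X χ(X) = 0` at `X = e + z` shows that `χ(e)` is killed by `z` too.
    have hz : ∀ z ∈ span ℝ (s : Set V), ∀ (w : Fin m → V) (j : Fin m),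
        w j = z → χ e w = 0 := by
      intro z hz w j hj
      have h1 := hχX (e + z) (add_mem he (hle hz)) (Function.update w j (e + z)) j
        (Function.update_self ..)
      have h2 := hχX e he (Function.update w j e) j (Function.update_self ..)
      rw [map_add, hχ0 z hz, add_zero, AlternatingMap.map_update_add, h2, zero_add, ← hj,
        Function.update_eq_self] at h1
      exact h1
    obtain ⟨η, hη⟩ := exists_iprod_eq_smul ε (χ e)
    refine ⟨β + η, fun X hX => ?_⟩
    have hX' := hX
    rw [mem_span_insert] at hX'
    obtain ⟨a, z, hzs, rfl⟩ := hX'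
    have hkill : ∀ (w : Fin m → V) (j : Fin m), w j = a • e + z → χ e w = 0 := by
      intro w j hj
      rw [← Function.update_eq_self j w, hj, AlternatingMap.map_update_add,
        AlternatingMap.map_update_smul, hχX e he _ j (Function.update_self ..),
        hz z hzs _ j (Function.update_self ..), smul_zero, add_zero]
    have hval : χ (a • e + z) = a • χ e := by
      rw [map_add, map_smul, hχ0 z hzs, add_zero]
    rw [map_add, hη _ hkill, map_add, map_smul, hε0 z hzs, hεe, add_zero, smul_eq_mul, mul_one,
      ← hval, hχ, add_sub_cancel]

/-- An isotropic `L` with `n - k < dim pr₁(L) < n` (non-standard)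
satisfies: (i) `L ∩ ∧^k V^* = {0}`, so `Ann(pr₁(L)) = L ∩ ∧^k V^*`;
(ii) `(L ∩ ∧^k V^*)° = V ≠ pr₁(L)`; (iii) `L` is not lagrangian.
(Here the `k` of the statement is `m + 1`.) -/
theorem stmt_19 {V : Type*} [AddCommGroup V] [Module ℝ V] [FiniteDimensional ℝ V]
    (m : ℕ) (hmn : m + 1 ≤ finrank ℝ V - 1)
    (L : Submodule ℝ (V × Alt V (m + 1)))
    (hiso : IsIsotropic V m L)
    (h1 : finrank ℝ V - (m + 1) < finrank ℝ (pr1 V m L))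
    (h2 : finrank ℝ (pr1 V m L) < finrank ℝ V) :
    capF V m L = ⊥ ∧
    AnnE V m (pr1 V m L) = capF V m L ∧
    polarS V m (capF V m L) = ⊤ ∧
    pr1 V m L ≠ ⊤ ∧
    L ≠ perpW V m L := by
  have hann : AnnE V m (pr1 V m L) = ⊥ := AnnE_eq_bot h1
  have hcap : capF V m L = ⊥ := by
    rw [eq_bot_iff, ← hann]
    rintro α hα X ⟨⟨X', ξ⟩, hl, rfl⟩
    have := hiso _ hα _ hl
    simpa [pairW, iprod] using this
  have hne : pr1 V m L ≠ ⊤ := by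
    intro h
    rw [h, finrank_top] at h2
    exact lt_irrefl _ h2
  refine ⟨hcap, hann.trans hcap.symm, ?_, hne, ?_⟩
  · rw [hcap, eq_top_iff]
    intro X _ α hα
    rw [(Submodule.mem_bot ℝ).1 hα, map_zero]
  intro hL
  obtain ⟨Y, hY⟩ : ∃ Y, Y ∉ pr1 V m L := by
    by_contra! h
    exact hne (eq_top_iff.2 fun X _ => h X)
  -- `L` is a graph over its projection: `g` sends `X` to the element of `L` above it.
  let f : L →ₗ[ℝ] V := (LinearMap.fst ℝ V (Alt V (m + 1))).comp L.subtype
  have hf : LinearMap.ker f = ⊥ := by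
    rw [eq_bot_iff]
    rintro ⟨⟨X, ξ⟩, hl⟩ hX
    obtain rfl : X = 0 := hX
    have hξ : ξ ∈ capF V m L := hl
    rw [hcap, Submodule.mem_bot] at hξ
    simp [hξ]
  obtain ⟨g, hg⟩ := LinearMap.exists_leftInverse_of_injective (K := ℝ) (V := L) (V' := V) f hf
  let ψ : V →ₗ[ℝ] Alt V m :=
    -((iprod V m Y).comp ((LinearMap.snd ℝ V (Alt V (m + 1))).comp (L.subtype.comp g)))
  have hψ : ∀ l : L, ψ l.1.1 = -iprod V m Y l.1.2 := by
    intro l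
    have : g l.1.1 = l := LinearMap.congr_fun hg l
    change -iprod V m Y (g l.1.1).1.2 = _
    rw [this]
  obtain ⟨β, hβ⟩ := exists_iprod_eq ψ (pr1 V m L) <| by
    rintro X ⟨⟨X', ξ⟩, hl, rfl⟩ w j hj
    -- The diagonal case of isotropy reads `2 i_X ξ = 0`.
    have hξ : iprod V m X' ξ = 0 := by
      ext u
      have := DFunLike.congr_fun (hiso _ hl _ hl) u
      change iprod V m X' ξ u + iprod V m X' ξ u = 0 at this
      change iprod V m X' ξ u = 0
      linarith
    have h0 : iprod V m Y ξ w = 0 :=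
      apply_eq_zero_of_iprod hξ (Matrix.vecCons Y w) j.succ (by simpa using hj)
    change ψ X' w = 0
    rw [hψ ⟨(X', ξ), hl⟩, AlternatingMap.neg_apply, h0, neg_zero]
  have hYβ : (Y, β) ∈ perpW V m L := by
    intro l hl
    change iprod V m Y l.2 + iprod V m l.1 β = 0
    rw [hβ l.1 ⟨l, hl, rfl⟩, hψ ⟨l, hl⟩, add_neg_cancel]
  rw [← hL] at hYβ
  exact hY ⟨(Y, β), hYβ, rfl⟩

end
end
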